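/- Let X and Y be Polish spaces, μ a Borel probability measure on X, ν a Borel probability measure on Y. Let U be a separable Banach space, F : Y → U a Borel measurable map with ∫_Y ‖F(y)‖_U ν(dy) < ∞, set g(p) = ∫_Y F(y) p(dy) (Bochner integral), and let h : X × U → ℝ be a Borel measurable function. Then the infimum of σ ↦ ∫_X h(x, g(σ^x)) μ(dx) over σ ∈ Π(μ,ν) is attained if and only if the infimum of T ↦ ∫_X h(x, T(x)) μ(dx) over all Borel measurable maps T : X → U with μ∘T⁻¹ ≼_c ν∘F⁻¹ is attained. -/

import Mathlib

/-!
Both problems range over the same set of values, so one attains its infimum if and only if the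
other does.

A coupling `σ ∈ Π(μ,ν)` gives the map `T x = ∫ F dσ^x`, and `T` is feasible for the Monge problem
by Jensen's inequality for the conditional measures (`condMeas_barycenter`).

Conversely, for a feasible `T` there is a coupling `σ ∈ Π(μ,ν)` with `∫ F dσ^x = T x` for
`μ`-almost every `x` (`exists_coupling`). This is a theorem of Strassen type, proved by compactness
and separation. Embedding `X` and `Y` in the Cantor space, one may work over compact spaces `S`
and `C`. The probability measures on `S × C` with second marginal `ν` form a compact convex set
(`sndMarginal`), on which the functionals `σ ↦ ∫ f(s) (c + l (G y)) dσ` are continuous for `f`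
continuous on `S`, `c` real and `l` in the dual of `U` (`continuous_integral_mul`). If some `σ` takes
the value `∫ f (c + l ∘ T) dμ` on each of these functionals, then its first marginal is `μ`
(take `c = 1`, `l = 0`) and its conditional barycenters are `T` (take `c = 0`). By compactness it is
enough to treat finitely many functionals, and by Hahn-Banach in `ℝⁿ` it is enough to find, for
each finite linear combination `Φ(s, u) = ∑ wᵢ fᵢ(s) (cᵢ + lᵢ u)`, a `σ` with
`∫ Φ(s, T s) dμ ≤ ∫ Φ(s, G y) dσ + ε` (`exists_forall_eq_of_compact`). Here `φ u = sup_s Φ(s, u)` is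
convex and lower semicontinuous, so the convex order gives
`∫ Φ(s, T s) dμ ≤ ∫ φ ∘ T dμ ≤ ∫ φ ∘ G dν`, and the image of `ν` under `y ↦ (s(y), y)`, where `s(y)` is
a measurable choice of `s` that is `ε`-optimal at `G y`, is the required `σ` (`exists_selection`).

The convex order is stated with Bochner integrals, which vanish on non-integrable functions;
nevertheless it forces `T` to be integrable (`integrable_of_convexDomB`).
-/

open MeasureTheory

noncomputable section

/-- The conditional measures `σ^x` of a probability measure `σ` on a product space with
respect to its first marginal, given by the disintegration `σ(dx dy) = σ^x(dy) μ(dx)`. -/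
def condMeas {X Y : Type*} [MeasurableSpace X] [MeasurableSpace Y]
    [StandardBorelSpace Y] [Nonempty Y]
    (σ : ProbabilityMeasure (X × Y)) (x : X) : Measure Y :=
  (σ : Measure (X × Y)).condKernel x

/-- `a` is the barycenter of the measure `μ` on a Banach space `U`:
`l(a) = ∫ l(u) μ(du)` for every continuous linear functional `l`. -/
def IsBarycenter {U : Type*} [NormedAddCommGroup U] [NormedSpace ℝ U] [MeasurableSpace U]
    (μ : Measure U) (a : U) : Prop :=
  ∀ l : U →L[ℝ] ℝ, l a = ∫ u, l u ∂μ

/-- Convex dominance (convex order) `ζ ≼_c η` for Borel measures on a separable Banach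
space: both measures have barycenters and `∫ φ dζ ≤ ∫ φ dη` for every lower semicontinuous
convex function `φ` integrable with respect to `η`. -/
def ConvexDomB {U : Type*} [NormedAddCommGroup U] [NormedSpace ℝ U] [MeasurableSpace U]
    (ζ η : Measure U) : Prop :=
  (∃ a, IsBarycenter ζ a) ∧ (∃ b, IsBarycenter η b) ∧
  ∀ φ : U → ℝ, LowerSemicontinuous φ → ConvexOn ℝ Set.univ φ → Integrable φ η →
    ∫ u, φ u ∂ζ ≤ ∫ u, φ u ∂η

/-! ### Jensen's inequality and integrability under the convex order -/

lemma exists_affine_minorant {U : Type*} [NormedAddCommGroup U] [NormedSpace ℝ U]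
    {φ : U → ℝ} (hφ : LowerSemicontinuous φ) (hφc : ConvexOn ℝ Set.univ φ) {u : U} {a : ℝ}
    (ha : a < φ u) : ∃ (l : U →L[ℝ] ℝ) (c : ℝ), (∀ v, l v + c ≤ φ v) ∧ l u + c = a := by
  obtain ⟨l, c, h1, h2⟩ := hφc.exists_affine_le_of_lt (𝕜 := ℝ) (Set.mem_univ u) ha isClosed_univ
    (lowerSemicontinuousOn_univ_iff.2 hφ)
  exact ⟨l, c, fun v => by simpa using h1 ⟨v, Set.mem_univ v⟩, by simpa using h2⟩

/-- Jensen's inequality for lower semicontinuous convex functions on a Banach space, by integrating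
affine minorants. -/
lemma convex_map_integral_le {U Y : Type*} [NormedAddCommGroup U] [NormedSpace ℝ U]
    [CompleteSpace U] [MeasurableSpace Y] {p : Measure Y} [IsProbabilityMeasure p] {F : Y → U}
    (hF : Integrable F p) {φ : U → ℝ} (hφ : LowerSemicontinuous φ)
    (hφc : ConvexOn ℝ Set.univ φ) (hi : Integrable (fun y => φ (F y)) p) :
    φ (∫ y, F y ∂p) ≤ ∫ y, φ (F y) ∂p := by
  refine le_of_forall_lt fun a ha => ?_
  obtain ⟨b, hab, hb⟩ := exists_between ha
  obtain ⟨l, c, h1, h2⟩ := exists_affine_minorant hφ hφc hb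
  refine hab.trans_le ?_
  have : ∫ y, (l (F y) + c) ∂p = b := by
    rw [integral_add (l.integrable_comp hF) (integrable_const c), l.integral_comp_comm hF]
    simpa using h2
  rw [← this]
  exact integral_mono ((l.integrable_comp hF).add (integrable_const c)) hi fun y => h1 _

/-- A map dominated in convex order by an integrable map is integrable. If `‖T‖` were not
`μ`-integrable, then the integral of `‖T‖ - C` would be `0` by convention for each constant `C`, while
the convex order bounds it by `∫ ‖F‖ dν - C`, which is negative for large `C`. -/
lemma integrable_of_convexDomB {U X Y : Type*} [NormedAddCommGroup U] [NormedSpace ℝ U]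
    [SecondCountableTopology U] [MeasurableSpace U] [BorelSpace U]
    [MeasurableSpace X] [MeasurableSpace Y] {μ : Measure X} [IsProbabilityMeasure μ]
    {ν : Measure Y} [IsProbabilityMeasure ν] {T : X → U} {F : Y → U} (hT : Measurable T)
    (hF : Measurable F) (hFi : Integrable F ν) (hd : ConvexDomB (μ.map T) (ν.map F)) :
    Integrable T μ := by
  by_contra hTi
  set C : ℝ := ∫ y, ‖F y‖ ∂ν + 1 with hC
  have hmeas : Measurable fun u : U => ‖u‖ - C := by fun_prop
  have h1 := hd.2.2 (fun u => ‖u‖ - C) (by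
      have : Continuous fun u : U => ‖u‖ - C := by fun_prop
      exact this.lowerSemicontinuous)
    (by
      have := (convexOn_univ_norm (E := U)).add_const (-C)
      simpa [sub_eq_add_neg] using! this)
    (by
      rw [integrable_map_measure hmeas.aestronglyMeasurable hF.aemeasurable]
      exact hFi.norm.sub (integrable_const C))
  rw [integral_map hT.aemeasurable hmeas.aestronglyMeasurable,
    integral_map hF.aemeasurable hmeas.aestronglyMeasurable] at h1
  rw [integral_undef, integral_sub hFi.norm (integrable_const C)] at h1
  · simp [hC] at h1
    linarith
  · intro h2
    refine hTi ((integrable_norm_iff hT.aestronglyMeasurable).1 ?_)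
    exact (h2.add (integrable_const C)).congr (.of_forall fun x => by simp)

/-- The conditional barycenters of a coupling of `μ` and `ν` form a measurable map whose law is
dominated in convex order by the law of `F`. -/
lemma condMeas_barycenter {X Y U : Type*} [MeasurableSpace X]
    [MeasurableSpace Y] [StandardBorelSpace Y] [Nonempty Y]
    {μ : Measure X} [IsProbabilityMeasure μ] {ν : Measure Y} [IsProbabilityMeasure ν]
    [NormedAddCommGroup U] [NormedSpace ℝ U] [CompleteSpace U]
    [SecondCountableTopology U] [MeasurableSpace U] [BorelSpace U]
    {F : Y → U} (hF : Measurable F) (hFi : Integrable F ν)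
    (σ : ProbabilityMeasure (X × Y)) (h1 : (σ : Measure (X × Y)).map Prod.fst = μ)
    (h2 : (σ : Measure (X × Y)).map Prod.snd = ν) :
    Measurable (fun x => ∫ y, F y ∂(condMeas σ x)) ∧
      ConvexDomB (μ.map fun x => ∫ y, F y ∂(condMeas σ x)) (ν.map F) := by
  have hfst : (σ : Measure (X × Y)).fst = μ := h1
  have hFσ : Integrable (fun q : X × Y => F q.2) (σ : Measure (X × Y)) := by
    rw [← h2] at hFi
    exact (integrable_map_measure hF.aestronglyMeasurable measurable_snd.aemeasurable).1 hFi
  have hT : Measurable (fun x => ∫ y, F y ∂(condMeas σ x)) := by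
    have : StronglyMeasurable fun x => ∫ y, F y ∂((σ : Measure (X × Y)).condKernel x) :=
      StronglyMeasurable.integral_kernel (f := F) (κ := (σ : Measure (X × Y)).condKernel)
        hF.stronglyMeasurable
    exact this.measurable
  have hTi : Integrable (fun x => ∫ y, F y ∂(condMeas σ x)) μ := by
    have := hFσ.integral_condKernel
    rwa [hfst] at this
  have hTint : ∫ x, (∫ y, F y ∂(condMeas σ x)) ∂μ = ∫ y, F y ∂ν := by
    have := Measure.integral_condKernel hFσ
    rw [hfst] at this
    unfold condMeas
    rw [this, ← h2, integral_map measurable_snd.aemeasurable hF.aestronglyMeasurable]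
  refine ⟨hT, ⟨∫ y, F y ∂ν, fun l => ?_⟩, ⟨∫ y, F y ∂ν, fun l => ?_⟩, fun φ hφ hφc hφi => ?_⟩
  · rw [integral_map hT.aemeasurable l.continuous.aestronglyMeasurable,
      l.integral_comp_comm hTi, hTint]
  · rw [integral_map hF.aemeasurable l.continuous.aestronglyMeasurable, l.integral_comp_comm hFi]
  · have hφm : Measurable φ := hφ.measurable
    rw [integral_map hT.aemeasurable hφm.aestronglyMeasurable,
      integral_map hF.aemeasurable hφm.aestronglyMeasurable]
    rw [integrable_map_measure hφm.aestronglyMeasurable hF.aemeasurable] at hφi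
    have hφσ : Integrable (fun q : X × Y => φ (F q.2)) (σ : Measure (X × Y)) := by
      rw [← h2] at hφi
      exact (integrable_map_measure (hφm.comp hF).aestronglyMeasurable
        measurable_snd.aemeasurable).1 hφi
    have hgi := hφσ.integral_condKernel
    have hgint := Measure.integral_condKernel hφσ
    rw [hfst] at hgi hgint
    have hle : ∀ᵐ x ∂μ, φ (∫ y, F y ∂(condMeas σ x)) ≤ ∫ y, φ (F y) ∂(condMeas σ x) := by
      have a1 := hφσ.condKernel_ae
      have a2 := hFσ.condKernel_ae
      rw [hfst] at a1 a2
      filter_upwards [a1, a2] with x b1 b2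
      exact convex_map_integral_le (p := (σ : Measure (X × Y)).condKernel x) b2 hφ hφc b1
    -- An affine minorant bounds `φ ∘ T` from below by an integrable function; Jensen bounds it from
    -- above.
    obtain ⟨l, c, hl, -⟩ := exists_affine_minorant hφ hφc (u := 0) (sub_one_lt _)
    have hφT : Integrable (fun x => φ (∫ y, F y ∂(condMeas σ x))) μ :=
      integrable_of_le_of_le (hφm.comp hT).aestronglyMeasurable
        (Filter.Eventually.of_forall fun x => hl _) hle
        ((l.integrable_comp hTi).add (integrable_const c)) hgi
    calc ∫ x, φ (∫ y, F y ∂(condMeas σ x)) ∂μ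
        ≤ ∫ x, ∫ y, φ (F y) ∂(condMeas σ x) ∂μ := integral_mono_ae hφT hgi hle
      _ = ∫ y, φ (F y) ∂ν := by
          unfold condMeas
          rw [hgint, ← h2]
          exact (integral_map measurable_snd.aemeasurable
            (hφm.comp hF).aestronglyMeasurable).symm

/-! ### Compactness and separation -/

/-- Let `(f i)` be continuous real functions on a compact space `E` that is convex as seen by the
`f i`. If no finite linear combination separates the target values `p i` from the values of the
`f i`, then the system `f i x = p i` has a solution. -/
lemma exists_forall_eq_of_compact {E ι : Type*} [TopologicalSpace E] [CompactSpace E]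
    (f : ι → E → ℝ) (hf : ∀ i, Continuous (f i))
    (hconv : ∀ x y : E, ∀ a b : ℝ, 0 ≤ a → 0 ≤ b → a + b = 1 →
      ∃ z, ∀ i, f i z = a * f i x + b * f i y)
    (p : ι → ℝ)
    (hp : ∀ (s : Finset ι) (w : ι → ℝ) (ε : ℝ), 0 < ε →
      ∃ x, ∑ i ∈ s, w i * p i ≤ ∑ i ∈ s, w i * f i x + ε) :
    ∃ x, ∀ i, f i x = p i := by
  classical
  suffices h : (⋂ i, {x | f i x = p i}).Nonempty by
    obtain ⟨x, hx⟩ := h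
    exact ⟨x, fun i => Set.mem_iInter.1 hx i⟩
  refine CompactSpace.iInter_nonempty (fun i => isClosed_eq (hf i) continuous_const) fun s => ?_
  let g : E → (s → ℝ) := fun x i => f i x
  have hg : Continuous g := continuous_pi fun i => hf i
  have hcomp : IsCompact (Set.range g) := isCompact_range hg
  have hcvx : Convex ℝ (Set.range g) := by
    rintro _ ⟨x, rfl⟩ _ ⟨y, rfl⟩ a b ha hb hab
    obtain ⟨z, hz⟩ := hconv x y a b ha hb hab
    exact ⟨z, funext fun i => by simp [g, hz]⟩
  by_cases hmem : (fun i : s => p i) ∈ Set.range g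
  · obtain ⟨x, hx⟩ := hmem
    exact ⟨x, Set.mem_iInter₂.2 fun i hi => congrFun hx ⟨i, hi⟩⟩
  obtain ⟨L, u, hL, hu⟩ := geometric_hahn_banach_closed_point hcvx hcomp.isClosed hmem
  exfalso
  -- The coefficients of the separating functional in the standard basis.
  let w : ι → ℝ := fun i => if hi : i ∈ s then L (Pi.single ⟨i, hi⟩ 1) else 0
  have hLw : ∀ q : ι → ℝ, L (fun i : s => q i) = ∑ i ∈ s, w i * q i := by
    intro q
    have := LinearMap.pi_apply_eq_sum_univ (L : (s → ℝ) →ₗ[ℝ] ℝ) (fun i : s => q i)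
    rw [← Finset.sum_coe_sort]
    simp only [ContinuousLinearMap.coe_coe] at this
    rw [this]
    refine Finset.sum_congr rfl fun i _ => ?_
    simp only [w, smul_eq_mul, i.2, dif_pos, mul_comm]
    congr 2
    ext j
    simp [Pi.single_apply, eq_comm]
  obtain ⟨x, hx⟩ := hp s w (L (fun i : s => p i) - u) (by linarith)
  have h1 := hL (g x) ⟨x, rfl⟩
  have h2 := hLw (fun i => f i x)
  have h3 := hLw p
  simp only [g] at h1
  rw [h2] at h1
  rw [← h3] at hx
  linarith

/-! ### Probability measures with prescribed second marginal -/

/-- The set of probability measures on `S × C` whose second marginal is `ν`; the first marginal is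
left free. -/
def sndMarginal {S C : Type*} [MeasurableSpace S] [MeasurableSpace C]
    (ν : Measure C) : Set (ProbabilityMeasure (S × C)) :=
  {σ | (σ : Measure (S × C)).map Prod.snd = ν}

lemma isClosed_sndMarginal {S C : Type*} [TopologicalSpace S] [PolishSpace S] [MeasurableSpace S]
    [BorelSpace S] [TopologicalSpace C] [PolishSpace C] [MeasurableSpace C] [BorelSpace C]
    (ν : Measure C) [IsProbabilityMeasure ν] : IsClosed (sndMarginal (S := S) ν) := by
  have hc : Continuous fun σ : ProbabilityMeasure (S × C) =>
      σ.map measurable_snd.aemeasurable :=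
    ProbabilityMeasure.continuous_map continuous_snd
  let ν' : ProbabilityMeasure C := ⟨ν, inferInstance⟩
  have : sndMarginal (S := S) ν =
      {σ : ProbabilityMeasure (S × C) | σ.map measurable_snd.aemeasurable = ν'} := by
    ext σ
    exact (Subtype.ext_iff (a1 := σ.map measurable_snd.aemeasurable) (a2 := ν')).symm
  rw [this]
  exact isClosed_eq hc continuous_const

lemma integrable_comp_snd {S C : Type*} [MeasurableSpace S] [MeasurableSpace C]
    {E : Type*} [NormedAddCommGroup E] {ν : Measure C} {g : C → E} (hg : Integrable g ν)
    {σ : Measure (S × C)} (hσ : σ.map Prod.snd = ν) :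
    Integrable (fun q : S × C => g q.2) σ := by
  rw [← hσ] at hg
  exact (integrable_map_measure hg.1 measurable_snd.aemeasurable).1 hg

lemma integrable_mul_comp_snd {S C : Type*} [TopologicalSpace S] [CompactSpace S]
    [MeasurableSpace S] [BorelSpace S] [MeasurableSpace C] {ν : Measure C} {g : C → ℝ}
    (hg : Integrable g ν) {σ : Measure (S × C)} (hσ : σ.map Prod.snd = ν) (f : C(S, ℝ)) :
    Integrable (fun q : S × C => f q.1 * g q.2) σ := by
  refine (integrable_comp_snd hg hσ).bdd_mul (c := ‖f‖) ?_
    (.of_forall fun q => f.norm_coe_le_norm _)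
  exact (f.continuous.measurable.comp measurable_fst).aestronglyMeasurable

/-- The integrand `f(s) g(y)` is in general not continuous in `y`, but `g` is an `L¹(ν)`-limit of
bounded continuous functions, and the approximation is uniform in `σ` since all `σ` have second
marginal `ν`. -/
lemma continuous_integral_mul {S C : Type*} [TopologicalSpace S] [CompactSpace S] [PolishSpace S]
    [MeasurableSpace S] [BorelSpace S] [TopologicalSpace C] [CompactSpace C] [PolishSpace C]
    [MeasurableSpace C] [BorelSpace C] {ν : Measure C} [IsProbabilityMeasure ν] {g : C → ℝ}
    (hg : Integrable g ν) (f : C(S, ℝ)) :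
    Continuous fun σ : sndMarginal (S := S) ν =>
      ∫ q, f q.1 * g q.2 ∂(σ.1 : Measure (S × C)) := by
  refine continuous_of_uniform_approx_of_continuous fun u hu => ?_
  obtain ⟨ε, hε, hεu⟩ := Metric.mem_uniformity_dist.1 hu
  have hf0 : 0 < ‖f‖ + 1 := by positivity
  obtain ⟨g', hg', hgi'⟩ := hg.exists_boundedContinuous_integral_sub_le
    (ε := ε / 2 / (‖f‖ + 1)) (by positivity)
  refine ⟨fun σ => ∫ q, f q.1 * g' q.2 ∂(σ.1 : Measure (S × C)), ?_, fun σ => hεu ?_⟩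
  · let k : C(S × C, ℝ) := ⟨fun q => f q.1 * g' q.2, by fun_prop⟩
    exact (ProbabilityMeasure.continuous_integral_continuousMap k).comp continuous_subtype_val
  · have hd : Integrable (fun y => g y - g' y) ν := hg.sub hgi'
    rw [Real.dist_eq, ← integral_sub (integrable_mul_comp_snd hg σ.2 f)
      (integrable_mul_comp_snd hgi' σ.2 f), ← Real.norm_eq_abs]
    calc ‖∫ q, (f q.1 * g q.2 - f q.1 * g' q.2) ∂(σ.1 : Measure (S × C))‖
        ≤ ∫ q, ‖f‖ * ‖g q.2 - g' q.2‖ ∂(σ.1 : Measure (S × C)) := by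
          refine norm_integral_le_of_norm_le
            ((integrable_comp_snd hd.norm σ.2).const_mul _) (.of_forall fun q => ?_)
          rw [← mul_sub, norm_mul]
          gcongr
          exact f.norm_coe_le_norm _
      _ = ‖f‖ * ∫ y, ‖g y - g' y‖ ∂ν := by
          rw [integral_const_mul]
          congr 1
          have := hd.norm
          rw [← σ.2] at this
          have h3 := integral_map measurable_snd.aemeasurable this.1
          rw [σ.2] at h3
          exact h3.symm
      _ ≤ ‖f‖ * (ε / 2 / (‖f‖ + 1)) := by gcongr
      _ ≤ (‖f‖ + 1) * (ε / 2 / (‖f‖ + 1)) := by gcongr; linarith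
      _ = ε / 2 := by field_simp
      _ < ε := by linarith

/-! ### Finite combinations of the constraints -/

/-- The inequality for a single jointly continuous integrand `Φ`, convex in its second variable and
of linear growth. With `φ u = sup_s Φ(s, u)`, the convex order gives `∫ Φ(s, T s) dμ ≤ ∫ φ ∘ G dν`, and
`σ` is the image of `ν` under `y ↦ (s(y), y)` for a measurable `s` with
`φ (G y) - ε < Φ(s(y), G y)`. -/
lemma exists_selection {S C U : Type*} [TopologicalSpace S] [PolishSpace S]
    [MeasurableSpace S] [BorelSpace S] [MeasurableSpace C]
    [NormedAddCommGroup U] [NormedSpace ℝ U] [SecondCountableTopology U] [MeasurableSpace U]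
    [BorelSpace U]
    {μ : Measure S} [IsProbabilityMeasure μ] {ν : Measure C} [IsProbabilityMeasure ν]
    {T : S → U} (hT : Measurable T) {G : C → U} (hG : Measurable G) (hGi : Integrable G ν)
    (hd : ConvexDomB (μ.map T) (ν.map G))
    {Φ : S → U → ℝ} (hΦ : Continuous (Function.uncurry Φ))
    (hΦc : ∀ s, ConvexOn ℝ Set.univ (Φ s)) {A B : ℝ} (hΦb : ∀ s u, |Φ s u| ≤ A + B * ‖u‖)
    {ε : ℝ} (hε : 0 < ε) :
    ∃ σ ∈ sndMarginal (S := S) ν,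
      ∫ s, Φ s (T s) ∂μ ≤ ∫ q, Φ q.1 (G q.2) ∂(σ : Measure (S × C)) + ε := by
  classical
  have hTi : Integrable T μ := integrable_of_convexDomB hT hG hGi hd
  have : Nonempty S := nonempty_of_isProbabilityMeasure μ
  let d : ℕ → S := TopologicalSpace.denseSeq S
  -- By continuity of `Φ`, the supremum over a dense sequence is the supremum over `S`; a countable
  -- supremum makes the choice of a near-optimal index measurable.
  let φ : U → ℝ := fun u => ⨆ n, Φ (d n) u
  have hbdd : ∀ u, BddAbove (Set.range fun n => Φ (d n) u) := fun u =>
    ⟨A + B * ‖u‖, by rintro _ ⟨n, rfl⟩; exact (abs_le.1 (hΦb _ _)).2⟩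
  have hΦs : ∀ s, Continuous (Φ s) := fun s => hΦ.comp (Continuous.prodMk_right s)
  have hle : ∀ s u, Φ s u ≤ φ u := by
    intro s u
    have hcl : IsClosed {s | Φ s u ≤ φ u} :=
      isClosed_le (hΦ.comp (Continuous.prodMk_left u)) continuous_const
    exact (TopologicalSpace.denseRange_denseSeq S).induction_on (p := fun s => Φ s u ≤ φ u) s hcl
      fun n => le_ciSup (hbdd u) n
  have hφb : ∀ u, |φ u| ≤ A + B * ‖u‖ := fun u =>
    abs_le.2 ⟨(abs_le.1 (hΦb (d 0) u)).1.trans (hle _ _),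
      ciSup_le fun n => (abs_le.1 (hΦb _ _)).2⟩
  have hφl : LowerSemicontinuous φ :=
    lowerSemicontinuous_ciSup hbdd fun n => (hΦs _).lowerSemicontinuous
  have hφc : ConvexOn ℝ Set.univ φ := by
    refine ⟨convex_univ, fun x _ y _ a b ha hb hab => ciSup_le fun n => ?_⟩
    refine ((hΦc (d n)).2 (Set.mem_univ x) (Set.mem_univ y) ha hb hab).trans ?_
    simp only [smul_eq_mul]
    gcongr <;> exact hle _ _
  have hφm : Measurable φ := hφl.measurable
  have hφT : Integrable (fun s => φ (T s)) μ :=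
    ((integrable_const A).add (hTi.norm.const_mul B)).mono' (hφm.comp hT).aestronglyMeasurable
      (.of_forall fun s => hφb _)
  have hφG : Integrable (fun y => φ (G y)) ν :=
    ((integrable_const A).add (hGi.norm.const_mul B)).mono' (hφm.comp hG).aestronglyMeasurable
      (.of_forall fun s => hφb _)
  have hex : ∀ y, ∃ n, φ (G y) - ε < Φ (d n) (G y) := fun y =>
    exists_lt_of_lt_ciSup (sub_lt_self _ hε)
  -- The least index that is `ε`-optimal at `G y`.
  let N : C → ℕ := fun y => Nat.find (hex y)
  have hN : Measurable N := measurable_find hex fun n =>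
    measurableSet_lt ((hφm.comp hG).sub_const ε) ((hΦs (d n)).measurable.comp hG)
  let sel : C → S × C := fun y => (d (N y), y)
  have hsel : Measurable sel := ((measurable_from_nat (f := d)).comp hN).prodMk measurable_id
  have hΦm : Measurable fun q : S × C => Φ q.1 (G q.2) :=
    hΦ.measurable.comp (measurable_fst.prodMk (hG.comp measurable_snd))
  refine ⟨⟨ν.map sel, Measure.isProbabilityMeasure_map hsel.aemeasurable⟩, ?_, ?_⟩
  · change (ν.map sel).map Prod.snd = ν
    rw [Measure.map_map measurable_snd hsel]
    exact Measure.map_id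
  · change _ ≤ ∫ q, Φ q.1 (G q.2) ∂(ν.map sel) + ε
    rw [integral_map hsel.aemeasurable hΦm.aestronglyMeasurable]
    have h1 : ∫ s, Φ s (T s) ∂μ ≤ ∫ s, φ (T s) ∂μ := by
      refine integral_mono ?_ hφT fun s => hle _ _
      exact ((integrable_const A).add (hTi.norm.const_mul B)).mono'
        (hΦ.measurable.comp (measurable_id.prodMk hT)).aestronglyMeasurable
        (.of_forall fun s => hΦb _ _)
    have h2 : ∫ s, φ (T s) ∂μ ≤ ∫ y, φ (G y) ∂ν := by
      have := hd.2.2 φ hφl hφc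
        ((integrable_map_measure hφm.aestronglyMeasurable hG.aemeasurable).2 hφG)
      rwa [integral_map hT.aemeasurable hφm.aestronglyMeasurable,
        integral_map hG.aemeasurable hφm.aestronglyMeasurable] at this
    have hΦG : Integrable (fun y => Φ (sel y).1 (G (sel y).2)) ν :=
      ((integrable_const A).add (hGi.norm.const_mul B)).mono'
        (hΦm.comp hsel).aestronglyMeasurable (.of_forall fun s => hΦb _ _)
    have h3 : ∫ y, φ (G y) ∂ν ≤ ∫ y, (Φ (sel y).1 (G (sel y).2) + ε) ∂ν := by
      refine integral_mono hφG (hΦG.add (integrable_const ε)) fun y => ?_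
      have := Nat.find_spec (hex y)
      change φ (G y) ≤ Φ (d (N y)) (G y) + ε
      linarith
    rw [integral_add hΦG (integrable_const ε)] at h3
    simp only [integral_const, probReal_univ, one_smul] at h3
    linarith

/-! ### Couplings with prescribed conditional barycenters -/

/-- Existence of a measure with second marginal `ν` that satisfies all the linear constraints
expressing that the first marginal is `μ` and the conditional barycenters are given by `T`. -/
lemma exists_forall_integral_mul_eq {S C U : Type*} [TopologicalSpace S] [CompactSpace S]
    [PolishSpace S] [MeasurableSpace S] [BorelSpace S] [TopologicalSpace C] [CompactSpace C]
    [PolishSpace C] [MeasurableSpace C] [BorelSpace C]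
    [NormedAddCommGroup U] [NormedSpace ℝ U] [SecondCountableTopology U] [MeasurableSpace U]
    [BorelSpace U]
    {μ : Measure S} [IsProbabilityMeasure μ] {ν : Measure C} [IsProbabilityMeasure ν]
    {T : S → U} (hT : Measurable T) {G : C → U} (hG : Measurable G) (hGi : Integrable G ν)
    (hd : ConvexDomB (μ.map T) (ν.map G)) :
    ∃ σ ∈ sndMarginal (S := S) ν, ∀ (f : C(S, ℝ)) (c : ℝ) (l : U →L[ℝ] ℝ),
      ∫ q, f q.1 * (c + l (G q.2)) ∂(σ : Measure (S × C)) = ∫ s, f s * (c + l (T s)) ∂μ := by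
  have hTi : Integrable T μ := integrable_of_convexDomB hT hG hGi hd
  have : CompactSpace (sndMarginal (S := S) ν) :=
    isCompact_iff_compactSpace.1 (isClosed_sndMarginal ν).isCompact
  have hgi : ∀ (c : ℝ) (l : U →L[ℝ] ℝ), Integrable (fun y => c + l (G y)) ν := fun c l =>
    (integrable_const c).add (l.integrable_comp hGi)
  have hti : ∀ (f : C(S, ℝ)) (c : ℝ) (l : U →L[ℝ] ℝ),
      Integrable (fun s => f s * (c + l (T s))) μ := fun f c l =>
    ((integrable_const c).add (l.integrable_comp hTi)).bdd_mul (c := ‖f‖)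
      f.continuous.measurable.aestronglyMeasurable (.of_forall fun q => f.norm_coe_le_norm _)
  obtain ⟨σ, hσ⟩ := exists_forall_eq_of_compact (E := sndMarginal (S := S) ν)
    (ι := C(S, ℝ) × ℝ × (U →L[ℝ] ℝ))
    (fun i σ => ∫ q, i.1 q.1 * (i.2.1 + i.2.2 (G q.2)) ∂(σ.1 : Measure (S × C)))
    (fun i => continuous_integral_mul (hgi i.2.1 i.2.2) i.1)
    (fun σ τ a b ha hb hab => by
      -- The convex combination of `σ` and `τ`.
      let m : Measure (S × C) := ENNReal.ofReal a • (σ.1 : Measure (S × C)) +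
        ENNReal.ofReal b • (τ.1 : Measure (S × C))
      have hm : IsProbabilityMeasure m := ⟨by
        simp [m, ← ENNReal.ofReal_add ha hb, hab]⟩
      have hms : m.map Prod.snd = ν := by
        have h1 : (σ.1 : Measure (S × C)).map Prod.snd = ν := σ.2
        have h2 : (τ.1 : Measure (S × C)).map Prod.snd = ν := τ.2
        simp only [m]
        rw [Measure.map_add _ _ measurable_snd, Measure.map_smul, Measure.map_smul, h1, h2,
          ← add_smul, ← ENNReal.ofReal_add ha hb, hab, ENNReal.ofReal_one, one_smul]
      refine ⟨⟨⟨m, hm⟩, hms⟩, fun i => ?_⟩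
      change ∫ q, i.1 q.1 * (i.2.1 + i.2.2 (G q.2)) ∂m = _
      have e1 := integrable_mul_comp_snd (hgi i.2.1 i.2.2) σ.2 i.1
      have e2 := integrable_mul_comp_snd (hgi i.2.1 i.2.2) τ.2 i.1
      simp only [m]
      rw [integral_add_measure (e1.smul_measure ENNReal.ofReal_ne_top)
        (e2.smul_measure ENNReal.ofReal_ne_top), integral_smul_measure, integral_smul_measure,
        ENNReal.toReal_ofReal ha, ENNReal.toReal_ofReal hb, smul_eq_mul, smul_eq_mul])
    (fun i => ∫ s, i.1 s * (i.2.1 + i.2.2 (T s)) ∂μ)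
    (fun t w ε hε => by
      -- The finite combination of constraints is the integral of an integrand affine in `u`.
      obtain ⟨σ, hσ, hle⟩ := exists_selection hT hG hGi hd
        (Φ := fun s u => ∑ i ∈ t, w i * (i.1 s * (i.2.1 + i.2.2 u)))
        (by simp only [Function.uncurry_def]; fun_prop)
        (fun s => by
          refine ⟨convex_univ, fun x _ y _ a b _ _ hab => le_of_eq ?_⟩
          simp only [smul_eq_mul, Finset.mul_sum, ← Finset.sum_add_distrib, map_add, map_smul]
          refine Finset.sum_congr rfl fun i _ => ?_
          obtain rfl : b = 1 - a := by linarith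
          ring)
        (A := ∑ i ∈ t, |w i| * (‖i.1‖ * |i.2.1|)) (B := ∑ i ∈ t, |w i| * (‖i.1‖ * ‖i.2.2‖))
        (fun s u => by
          rw [Finset.sum_mul, ← Finset.sum_add_distrib]
          refine (Finset.abs_sum_le_sum_abs _ _).trans (Finset.sum_le_sum fun i _ => ?_)
          rw [abs_mul, abs_mul]
          calc |w i| * (|i.1 s| * |i.2.1 + i.2.2 u|)
              ≤ |w i| * (‖i.1‖ * (|i.2.1| + ‖i.2.2‖ * ‖u‖)) := by
                gcongr
                · exact i.1.norm_coe_le_norm s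
                · exact (abs_add_le _ _).trans (by gcongr; exact i.2.2.le_opNorm u)
            _ = _ := by ring) hε
      refine ⟨⟨σ, hσ⟩, ?_⟩
      rw [integral_finsetSum _ fun i _ => (hti i.1 i.2.1 i.2.2).const_mul _,
        integral_finsetSum _ fun i _ =>
          (integrable_mul_comp_snd (hgi i.2.1 i.2.2) hσ i.1).const_mul _] at hle
      simpa only [integral_const_mul] using hle)
  exact ⟨σ.1, σ.2, fun f c l => hσ (f, c, l)⟩

/-- An integrable `D` with `∫ f(s) l(D s) dμ = 0` for all continuous `f` and all functionals `l`
vanishes a.e.: indicators of closed sets are limits of continuous functions, so the integral of `D`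
over each closed set is zero. -/
lemma ae_eq_zero_of_forall_integral_mul_eq_zero {S U : Type*} [TopologicalSpace S]
    [PolishSpace S] [MeasurableSpace S] [BorelSpace S] [NormedAddCommGroup U] [NormedSpace ℝ U]
    [CompleteSpace U] {μ : Measure S} [IsProbabilityMeasure μ] {D : S → U} (hD : Integrable D μ)
    (h : ∀ (f : C(S, ℝ)) (l : U →L[ℝ] ℝ), ∫ s, f s * l (D s) ∂μ = 0) : D =ᵐ[μ] 0 := by
  let := TopologicalSpace.upgradeIsCompletelyMetrizable S
  refine ae_eq_zero_of_forall_setIntegral_isClosed_eq_zero hD fun A hA => ?_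
  refine (SeparatingDual.eq_zero_iff_forall_dual_eq_zero (R := ℝ) _).2 fun l => ?_
  rw [← l.integral_comp_comm hD.integrableOn, ← integral_indicator hA.measurableSet]
  let f : ℕ → C(S, ℝ) := fun n => ⟨fun s => (hA.apprSeq n s : ℝ), by fun_prop⟩
  have hlim : Filter.Tendsto (fun n => ∫ s, f n s * l (D s) ∂μ) Filter.atTop
      (nhds (∫ s, A.indicator (fun s => l (D s)) s ∂μ)) := by
    refine tendsto_integral_of_dominated_convergence (fun s => ‖l (D s)‖)
      (fun n => ((f n).continuous.aestronglyMeasurable).mul (l.integrable_comp hD).1)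
      (l.integrable_comp hD).norm (fun n => .of_forall fun s => ?_) (.of_forall fun s => ?_)
    · rw [norm_mul]
      refine mul_le_of_le_one_left (norm_nonneg _) ?_
      simpa [f] using! HasOuterApproxClosed.apprSeq_apply_le_one hA n s
    · have h1 := (tendsto_pi_nhds.1 (HasOuterApproxClosed.tendsto_apprSeq hA)) s
      have h2 := ((NNReal.continuous_coe.tendsto _).comp h1).mul_const (l (D s))
      have h3 : A.indicator (fun s => l (D s)) s =
          ((A.indicator (fun _ => (1 : NNReal)) s : NNReal) : ℝ) * l (D s) := by
        by_cases hs : s ∈ A <;> simp [hs]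
      rw [h3]
      exact h2
  simp only [h] at hlim
  exact tendsto_nhds_unique hlim tendsto_const_nhds

/-- The Strassen-type theorem over compact spaces. The conclusion is stated through integrals over
`A × C` rather than conditional measures, so that it can be transported by measurable maps. -/
lemma exists_coupling_of_compact {S C U : Type*} [TopologicalSpace S] [CompactSpace S]
    [PolishSpace S] [MeasurableSpace S] [BorelSpace S] [TopologicalSpace C] [CompactSpace C]
    [PolishSpace C] [MeasurableSpace C] [BorelSpace C]
    [NormedAddCommGroup U] [NormedSpace ℝ U] [CompleteSpace U] [SecondCountableTopology U]
    [MeasurableSpace U] [BorelSpace U]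
    {μ : Measure S} [IsProbabilityMeasure μ] {ν : Measure C} [IsProbabilityMeasure ν]
    {T : S → U} (hT : Measurable T) {G : C → U} (hG : Measurable G) (hGi : Integrable G ν)
    (hd : ConvexDomB (μ.map T) (ν.map G)) :
    ∃ σ : ProbabilityMeasure (S × C), (σ : Measure (S × C)).map Prod.fst = μ ∧
      (σ : Measure (S × C)).map Prod.snd = ν ∧ ∀ A : Set S, MeasurableSet A →
        ∫ q in A ×ˢ Set.univ, G q.2 ∂(σ : Measure (S × C)) = ∫ s in A, T s ∂μ := by
  have hTi : Integrable T μ := integrable_of_convexDomB hT hG hGi hd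
  have : Nonempty C := nonempty_of_isProbabilityMeasure ν
  obtain ⟨σ, hσ, h⟩ := exists_forall_integral_mul_eq hT hG hGi hd
  have hfst : (σ : Measure (S × C)).map Prod.fst = μ := by
    have : IsProbabilityMeasure ((σ : Measure (S × C)).map Prod.fst) :=
      Measure.isProbabilityMeasure_map measurable_fst.aemeasurable
    refine ext_of_forall_integral_eq_of_IsFiniteMeasure fun f => ?_
    rw [integral_map measurable_fst.aemeasurable f.continuous.aestronglyMeasurable]
    -- The constraints with `c = 1` and `l = 0`.
    simpa using! h f.toContinuousMap 1 0
  have hfst' : (σ : Measure (S × C)).fst = μ := hfst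
  have hGσ : Integrable (fun q : S × C => G q.2) (σ : Measure (S × C)) := integrable_comp_snd hGi hσ
  have hbi : Integrable (fun s => ∫ y, G y ∂((σ : Measure (S × C)).condKernel s)) μ := by
    have := hGσ.integral_condKernel
    rwa [hfst'] at this
  have hae : ∀ᵐ s ∂μ, Integrable G ((σ : Measure (S × C)).condKernel s) := by
    have := hGσ.condKernel_ae
    rwa [hfst'] at this
  have hzero := ae_eq_zero_of_forall_integral_mul_eq_zero (hbi.sub hTi) fun f l => by
    -- The constraints with `c = 0`, disintegrated along the first marginal.
    have e1 : ∫ s, f s * l (∫ y, G y ∂((σ : Measure (S × C)).condKernel s)) ∂μ =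
        ∫ s, f s * l (T s) ∂μ := by
      have h1 := h f 0 l
      simp only [zero_add] at h1
      rw [← h1, ← Measure.integral_condKernel
        (integrable_mul_comp_snd (l.integrable_comp hGi) hσ f), hfst']
      refine integral_congr_ae ?_
      filter_upwards [hae] with s hs
      rw [integral_const_mul, l.integral_comp_comm hs]
    have hb : ∀ {H : S → U}, Integrable H μ → Integrable (fun s => f s * l (H s)) μ := fun hH =>
      (l.integrable_comp hH).bdd_mul (c := ‖f‖)
        f.continuous.measurable.aestronglyMeasurable (.of_forall fun q => f.norm_coe_le_norm _)
    simp only [Pi.sub_apply, map_sub, mul_sub]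
    rw [integral_sub (hb hbi) (hb hTi), e1, sub_self]
  refine ⟨σ, hfst, hσ, fun A hA => ?_⟩
  rw [← Measure.setIntegral_condKernel_univ_right hA hGσ.integrableOn, hfst']
  refine integral_congr_ae (ae_restrict_of_ae ?_)
  filter_upwards [hzero] with s hs
  simpa [sub_eq_zero] using hs

/-- A standard Borel space is a measurable retract of the Cantor space. -/
lemma exists_measurableEmbedding_cantor (X : Type*) [MeasurableSpace X] [StandardBorelSpace X]
    [Nonempty X] : ∃ (e : X → ℕ → Bool) (r : (ℕ → Bool) → X), Measurable e ∧ Measurable r ∧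
      ∀ x, r (e x) = x := by
  have he : MeasurableEmbedding (MeasurableSpace.mapNatBool X) :=
    (MeasurableSpace.measurable_mapNatBool X).measurableEmbedding
      (MeasurableSpace.injective_mapNatBool X)
  obtain ⟨r, hr, hre⟩ := he.exists_measurable_extend measurable_id fun _ => ‹Nonempty X›
  exact ⟨_, r, he.measurable, hr, congrFun hre⟩

/-- Strassen-type theorem: if the law of `T` is dominated in convex order by the law of `F`, then some
coupling of `μ` and `ν` has conditional barycenters `T`, almost everywhere. -/
lemma exists_coupling {X Y U : Type*} [MeasurableSpace X] [StandardBorelSpace X]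
    [MeasurableSpace Y] [StandardBorelSpace Y] [Nonempty Y]
    [NormedAddCommGroup U] [NormedSpace ℝ U] [CompleteSpace U] [SecondCountableTopology U]
    [MeasurableSpace U] [BorelSpace U]
    {μ : Measure X} [IsProbabilityMeasure μ] {ν : Measure Y} [IsProbabilityMeasure ν]
    {T : X → U} (hT : Measurable T) {F : Y → U} (hF : Measurable F) (hFi : Integrable F ν)
    (hd : ConvexDomB (μ.map T) (ν.map F)) :
    ∃ σ : ProbabilityMeasure (X × Y), (σ : Measure (X × Y)).map Prod.fst = μ ∧
      (σ : Measure (X × Y)).map Prod.snd = ν ∧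
      (fun x => ∫ y, F y ∂(condMeas σ x)) =ᵐ[μ] T := by
  have : Nonempty X := nonempty_of_isProbabilityMeasure μ
  have hTi : Integrable T μ := integrable_of_convexDomB hT hF hFi hd
  obtain ⟨e, r, he, hr, hre⟩ := exists_measurableEmbedding_cantor X
  obtain ⟨e', r', he', hr', hre'⟩ := exists_measurableEmbedding_cantor Y
  have : IsProbabilityMeasure (μ.map e) := Measure.isProbabilityMeasure_map he.aemeasurable
  have : IsProbabilityMeasure (ν.map e') := Measure.isProbabilityMeasure_map he'.aemeasurable
  have hμr : (μ.map e).map r = μ := by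
    rw [Measure.map_map hr he, show r ∘ e = id from funext hre, Measure.map_id]
  have hνr : (ν.map e').map r' = ν := by
    rw [Measure.map_map hr' he', show r' ∘ e' = id from funext hre', Measure.map_id]
  have : PolishSpace Bool := inferInstance
  have : PolishSpace (ℕ → Bool) := inferInstance
  obtain ⟨τ, h1, h2, h3⟩ := exists_coupling_of_compact (μ := μ.map e) (ν := ν.map e')
    (T := T ∘ r) (G := F ∘ r') (hT.comp hr) (hF.comp hr')
    ((integrable_map_measure (hF.comp hr').aestronglyMeasurable he'.aemeasurable).2 (by
      simpa [Function.comp_def, hre'] using hFi))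
    (by rwa [← Measure.map_map hT hr, ← Measure.map_map hF hr', hμr, hνr])
  have hR : Measurable (Prod.map r r') := hr.prodMap hr'
  let σ : ProbabilityMeasure (X × Y) := τ.map hR.aemeasurable
  have hσ : (σ : Measure (X × Y)) = (τ : Measure _).map (Prod.map r r') := rfl
  have s1 : (σ : Measure (X × Y)).map Prod.fst = μ := by
    rw [hσ, Measure.map_map measurable_fst hR, Prod.map_fst', ← Measure.map_map hr measurable_fst,
      h1, hμr]
  have s2 : (σ : Measure (X × Y)).map Prod.snd = ν := by
    rw [hσ, Measure.map_map measurable_snd hR, Prod.map_snd',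
      ← Measure.map_map hr' measurable_snd, h2, hνr]
  have s1' : (σ : Measure (X × Y)).fst = μ := s1
  have hFσ : Integrable (fun q : X × Y => F q.2) (σ : Measure (X × Y)) :=
    integrable_comp_snd hFi s2
  refine ⟨σ, s1, s2, ?_⟩
  have hbi : Integrable (fun x => ∫ y, F y ∂(condMeas σ x)) μ := by
    have := hFσ.integral_condKernel
    rwa [s1'] at this
  refine hbi.ae_eq_of_forall_setIntegral_eq _ _ hTi fun B hB _ => ?_
  have k1 := Measure.setIntegral_condKernel_univ_right hB
    (hFσ.integrableOn (s := B ×ˢ Set.univ))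
  rw [s1'] at k1
  refine k1.trans ?_
  have hFm : Measurable fun q : X × Y => F q.2 := hF.comp measurable_snd
  rw [hσ, setIntegral_map (hB.prod MeasurableSet.univ) hFm.aestronglyMeasurable hR.aemeasurable]
  have k2 := h3 (r ⁻¹' B) (hr hB)
  have k3 : Prod.map r r' ⁻¹' (B ×ˢ Set.univ) = (r ⁻¹' B) ×ˢ Set.univ := by ext; simp
  rw [k3]
  refine k2.trans ?_
  rw [setIntegral_map (hr hB) (hT.comp hr).aestronglyMeasurable he.aemeasurable,
    ← Set.preimage_comp, show r ∘ e = id from funext hre]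
  simp [hre]

/-- **Infinite-dimensional case: the nonlinear Kantorovich problem with cost
`h(x, g(σ^x))`, `g(p) = ∫ F dp` (Bochner integral), attains its infimum iff the
corresponding Monge problem with convex dominance does.** Let `X, Y` be Polish spaces,
`μ, ν` Borel probability measures, `U` a separable Banach space, `F : Y → U` Borel
measurable with `∫ ‖F‖ dν < ∞`, and `h : X × U → ℝ` Borel measurable. Then the infimum of
`σ ↦ ∫_X h(x, g(σ^x)) dμ` over `Π(μ,ν)` is attained if and only if the infimum of
`T ↦ ∫_X h(x, T(x)) dμ` over Borel maps `T : X → U` with `μ∘T⁻¹ ≼_c ν∘F⁻¹` is attained. -/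
theorem exists_min_nonlinear_kantorovich_iff_exists_min_monge_convexDom_banach
    {X Y : Type*} [MeasurableSpace X] [TopologicalSpace X] [PolishSpace X] [BorelSpace X]
    [MeasurableSpace Y] [TopologicalSpace Y] [PolishSpace Y] [BorelSpace Y] [Nonempty Y]
    (μ : Measure X) [IsProbabilityMeasure μ] (ν : Measure Y) [IsProbabilityMeasure ν]
    {U : Type*} [NormedAddCommGroup U] [NormedSpace ℝ U] [CompleteSpace U]
    [TopologicalSpace.SeparableSpace U] [MeasurableSpace U] [BorelSpace U]
    (F : Y → U) (hFmeas : Measurable F)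
    (hFint : Integrable F ν)
    (h : X → U → ℝ) (hh : Measurable (fun q : X × U => h q.1 q.2)) :
    (∃ σ : {σ : ProbabilityMeasure (X × Y) //
        (σ : Measure (X × Y)).map Prod.fst = μ ∧ (σ : Measure (X × Y)).map Prod.snd = ν},
      ∀ σ' : {σ' : ProbabilityMeasure (X × Y) //
        (σ' : Measure (X × Y)).map Prod.fst = μ ∧ (σ' : Measure (X × Y)).map Prod.snd = ν},
        ∫ x, h x (∫ y, F y ∂(condMeas σ.1 x)) ∂μ ≤
          ∫ x, h x (∫ y, F y ∂(condMeas σ'.1 x)) ∂μ) ↔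
    (∃ T : {T : X → U // Measurable T ∧ ConvexDomB (μ.map T) (ν.map F)},
      ∀ T' : {T' : X → U // Measurable T' ∧ ConvexDomB (μ.map T') (ν.map F)},
        ∫ x, h x (T.1 x) ∂μ ≤ ∫ x, h x (T'.1 x) ∂μ) := by
  constructor
  · rintro ⟨⟨σ, h1, h2⟩, hσ⟩
    obtain ⟨m1, m2⟩ := condMeas_barycenter hFmeas hFint σ h1 h2
    refine ⟨⟨_, m1, m2⟩, fun ⟨T', hT', hd'⟩ => ?_⟩
    obtain ⟨σ', s1, s2, hae⟩ := exists_coupling hT' hFmeas hFint hd'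
    refine (hσ ⟨σ', s1, s2⟩).trans_eq (integral_congr_ae ?_)
    filter_upwards [hae] with x hx
    exact congrArg (h x) hx
  · rintro ⟨⟨T, hT, hd⟩, hmin⟩
    obtain ⟨σ, s1, s2, hae⟩ := exists_coupling hT hFmeas hFint hd
    refine ⟨⟨σ, s1, s2⟩, fun ⟨σ', h1, h2⟩ => ?_⟩
    obtain ⟨m1, m2⟩ := condMeas_barycenter hFmeas hFint σ' h1 h2
    refine le_of_eq_of_le (integral_congr_ae ?_) (hmin ⟨_, m1, m2⟩)
    filter_upwards [hae] with x hx
    exact congrArg (h x) hx
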